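/- Let S be a semioval of size q − 1 + a in PG(2,q) with a > 2, suppose S has an a-secant ℓ with nucleus N_ℓ, and let m ≠ ℓ be a k-secant of S. Then: (1) for every R ∈ S∖ℓ, the line RN_ℓ is not a tangent to S; (2) if k ≥ 3, then the tangents to S at the points of m ∩ S are contained in a pencil whose carrier lies on ℓ; (3) if k > (a − 1)/2, then either k = a and N_ℓ ∈ m, or k = ⌈a/2⌉ and N_ℓ ∉ m. -/

import Mathlib

/-! Common setup: the Desarguesian projective plane `PG(2,q)` over a finite field `F = GF(q)`.
Points are the projective points of `F³`; lines are the 2-dimensional linear subspaces of `F³`,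
with incidence given by containment. -/

/-- Points of `PG(2,F)`. -/
abbrev PGPoint (F : Type*) [Field F] := Projectivization F (Fin 3 → F)

/-- Lines of `PG(2,F)`: the 2-dimensional linear subspaces of `F³`. -/
abbrev PGLine (F : Type*) [Field F] := {W : Submodule F (Fin 3 → F) // Module.finrank F W = 2}

/-- Incidence between a point and a line of `PG(2,F)`. -/
def pgMem {F : Type*} [Field F] (P : PGPoint F) (L : PGLine F) : Prop :=
  P.submodule ≤ L.val

/-- The number of points of the point set `B` lying on the line `L`;
`L` is a *`k`-secant* of `B` if `nsec B L = k`, a *tangent* if `k = 1`,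
a *bisecant* if `k = 2` and a *trisecant* if `k = 3`. -/
noncomputable def nsec {F : Type*} [Field F] (B : Set (PGPoint F)) (L : PGLine F) : ℕ :=
  {P ∈ B | pgMem P L}.ncard

/-- A blocking set: a point set meeting every line. -/
def isBlocking {F : Type*} [Field F] (B : Set (PGPoint F)) : Prop :=
  ∀ L : PGLine F, ∃ P ∈ B, pgMem P L

/-- A minimal blocking set: every point is essential. -/
def isMinimalBlocking {F : Type*} [Field F] (B : Set (PGPoint F)) : Prop :=
  isBlocking B ∧ ∀ P ∈ B, ¬ isBlocking (B \ {P})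

/-- `B` is a blocking set of Rédei type with Rédei line `ℓ`: a blocking set of size
`q + N ≤ 2q` such that `ℓ` meets `B` in exactly `N = |B| − q` points. -/
def isRedeiWithLine {F : Type*} [Field F] (q : ℕ) (B : Set (PGPoint F)) (ℓ : PGLine F) : Prop :=
  isBlocking B ∧ B.ncard ≤ 2 * q ∧ nsec B ℓ + q = B.ncard

/-- A semioval: through each of its points there passes exactly one tangent. -/
def isSemioval {F : Type*} [Field F] (S : Set (PGPoint F)) : Prop :=
  ∀ P ∈ S, ∃! t : PGLine F, pgMem P t ∧ nsec S t = 1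

open Finset Polynomial

/-!
Let `V = (S ∖ ℓ) ∪ {N}` and take `ℓ` as line at infinity. Then `V` consists of `q` affine points,
and every line other than `ℓ` through a point of `D = S ∩ ℓ` meets `V` (in `N` if it is a tangent
to `S`), hence exactly once: `V` does not determine the directions in `D`. For `R ∈ V` put
`f_R(u) = ∏ ((y_Q - y_R) - u (x_Q - x_R))`, the product over the points `Q ≠ R` of `V`. It vanishes
at `u` unless the line of slope `u` through `R` meets `V` in `R` only, and it equals `-1` on `D`, by
Wilson's theorem. If `R ∈ S ∖ ℓ`, then at most one direction outside `D` is a direction of a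
tangent to `V` at `R`, that of the tangent to `S` at `R`, provided this tangent misses `N`.

If the vertical line through `R` has `c` points of `V`, then `f_R` has degree at most `q - c`. For
`c ≥ 2` its values therefore sum to `0`, so the characteristic divides `a` if and only if the
tangent to `S` at `R` passes through `N`; if it did so for one `R`, all tangents would pass
through `N` and `S` would have at most `q + 1` points. For `c ≥ 3`, the polynomials of two points
on the same vertical line agree at `q - 2` places and so coincide, and then parallel lines through
the two points have equally many points of `V`, the multiplicities of the roots of `f_R` being
determined by these numbers. This gives the carrier on `ℓ`, and the bounds on `k` follow by
counting the points of `V` on the lines through a point `R` of `m`.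
-/

section Incidence

variable {F : Type*} [Field F]

lemma pgMem_iff_rep_mem {P : PGPoint F} {L : PGLine F} : pgMem P L ↔ P.rep ∈ L.val := by
  rw [pgMem, Projectivization.submodule_eq, Submodule.span_singleton_le_iff_mem]

lemma pgMem_mk_iff {v : Fin 3 → F} (hv : v ≠ 0) {L : PGLine F} :
    pgMem (Projectivization.mk F v hv) L ↔ v ∈ L.val := by
  rw [pgMem, Projectivization.submodule_mk, Submodule.span_singleton_le_iff_mem]

lemma exists_line_through (P Q : PGPoint F) : ∃ L : PGLine F, pgMem P L ∧ pgMem Q L := by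
  have hlt : Submodule.span F (Set.range ![P.rep, Q.rep]) < ⊤ :=
    Submodule.lt_top_of_finrank_lt_finrank <|
      (finrank_range_le_card _).trans_lt (by simp)
  obtain ⟨f, hf, hle⟩ := Submodule.exists_le_ker_of_lt_top _ hlt
  have hrank : Module.finrank F (LinearMap.ker f) = 2 := by
    have := Module.Dual.finrank_ker_add_one_of_ne_zero hf
    rw [Module.finrank_fin_fun] at this
    omega
  exact ⟨⟨LinearMap.ker f, hrank⟩, pgMem_iff_rep_mem.mpr (hle (Submodule.subset_span ⟨0, rfl⟩)),
    pgMem_iff_rep_mem.mpr (hle (Submodule.subset_span ⟨1, rfl⟩))⟩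

lemma line_unique {P Q : PGPoint F} (h : P ≠ Q) {L L' : PGLine F}
    (hP : pgMem P L) (hQ : pgMem Q L) (hP' : pgMem P L') (hQ' : pgMem Q L') : L = L' := by
  have hrank : Module.finrank F (Submodule.span F {P.rep, Q.rep}) = 2 := by
    have := finrank_span_eq_card (Projectivization.linearIndependent_pair_iff_ne.mpr h)
    rwa [Matrix.range_cons_cons_empty, Fintype.card_fin] at this
  have span_eq : ∀ K : PGLine F, pgMem P K → pgMem Q K →
      Submodule.span F {P.rep, Q.rep} = K.val := fun K hPK hQK =>
    Submodule.eq_of_le_of_finrank_eq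
      (Submodule.span_le.mpr (Set.pair_subset (pgMem_iff_rep_mem.mp hPK)
        (pgMem_iff_rep_mem.mp hQK))) (hrank.trans K.2.symm)
  exact Subtype.ext ((span_eq L hP hQ).symm.trans (span_eq L' hP' hQ'))

lemma exists_common_point (L L' : PGLine F) : ∃ P : PGPoint F, pgMem P L ∧ pgMem P L' := by
  have hdim := Submodule.finrank_sup_add_finrank_inf_eq L.val L'.val
  have hle : Module.finrank F (L.val ⊔ L'.val : Submodule F (Fin 3 → F)) ≤ 3 := by
    simpa using Submodule.finrank_le (L.val ⊔ L'.val)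
  have hne : L.val ⊓ L'.val ≠ ⊥ := by
    intro h
    rw [h, L.2, L'.2, finrank_bot] at hdim
    omega
  obtain ⟨v, hv, hv0⟩ := Submodule.exists_mem_ne_zero_of_ne_bot hne
  exact ⟨Projectivization.mk F v hv0, (pgMem_mk_iff hv0).mpr hv.1, (pgMem_mk_iff hv0).mpr hv.2⟩

lemma common_point_unique {L L' : PGLine F} (h : L ≠ L') {P Q : PGPoint F}
    (hP : pgMem P L) (hP' : pgMem P L') (hQ : pgMem Q L) (hQ' : pgMem Q L') : P = Q := by
  by_contra hne
  exact h (line_unique hne hP hQ hP' hQ')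

/-- The line joining two points, and some line through `P` if `P = Q`. -/
noncomputable def pgJoin (P Q : PGPoint F) : PGLine F := (exists_line_through P Q).choose

lemma left_mem_pgJoin (P Q : PGPoint F) : pgMem P (pgJoin P Q) :=
  (exists_line_through P Q).choose_spec.1

lemma right_mem_pgJoin (P Q : PGPoint F) : pgMem Q (pgJoin P Q) :=
  (exists_line_through P Q).choose_spec.2

lemma eq_pgJoin {P Q : PGPoint F} (h : P ≠ Q) {L : PGLine F} (hP : pgMem P L) (hQ : pgMem Q L) :
    L = pgJoin P Q :=
  line_unique h hP hQ (left_mem_pgJoin P Q) (right_mem_pgJoin P Q)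

/-- The common point of two lines, and some point of `L` if `L = L'`. -/
noncomputable def pgMeet (L L' : PGLine F) : PGPoint F := (exists_common_point L L').choose

lemma pgMeet_mem_left (L L' : PGLine F) : pgMem (pgMeet L L') L :=
  (exists_common_point L L').choose_spec.1

lemma pgMeet_mem_right (L L' : PGLine F) : pgMem (pgMeet L L') L' :=
  (exists_common_point L L').choose_spec.2

lemma pgJoin_ne {P : PGPoint F} {ℓ : PGLine F} (hP : ¬ pgMem P ℓ) (Q : PGPoint F) :
    pgJoin P Q ≠ ℓ :=
  fun h => hP (h ▸ left_mem_pgJoin P Q)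

/-- Affine coordinates `(x, y)` on the complement of the line `ℓ`. The point `dir u` of `ℓ` is the
direction of the lines of slope `u`, and `M` is the vertical direction. The values of `x` and `y` at
the points of `ℓ` are arbitrary. -/
structure AffineChart (ℓ : PGLine F) (M : PGPoint F) where
  x : PGPoint F → F
  y : PGPoint F → F
  dir : F → PGPoint F
  dir_injective : Function.Injective dir
  mem_range_dir : ∀ P, P ∈ Set.range dir ↔ pgMem P ℓ ∧ P ≠ M
  exists_coords : ∀ c d, ∃ Q, ¬ pgMem Q ℓ ∧ x Q = c ∧ y Q = d
  mem_join_dir : ∀ u Q R, ¬ pgMem Q ℓ → ¬ pgMem R ℓ →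
    (pgMem Q (pgJoin R (dir u)) ↔ y Q - u * x Q = y R - u * x R)
  mem_join_vertical : ∀ Q R, ¬ pgMem Q ℓ → ¬ pgMem R ℓ → (pgMem Q (pgJoin R M) ↔ x Q = x R)

lemma exists_adapted_basis {ℓ : PGLine F} {M : PGPoint F} (hM : pgMem M ℓ) :
    ∃ b : Module.Basis (Fin 3) F (Fin 3 → F),
      b 2 = M.rep ∧ ∀ v, v ∈ ℓ.val ↔ b.repr v 0 = 0 := by
  obtain ⟨w, hw, hwM⟩ : ∃ w ∈ ℓ.val, w ∉ Submodule.span F {M.rep} := by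
    refine SetLike.not_le_iff_exists.mp fun hle => ?_
    have := Submodule.finrank_mono hle
    rw [finrank_span_singleton M.rep_nonzero, ℓ.2] at this
    omega
  have hli : LinearIndependent F ![w, M.rep] :=
    linearIndependent_finCons.mpr ⟨LinearIndependent.of_subsingleton 0 M.rep_nonzero, by
      simpa [Matrix.range_cons] using hwM⟩
  have hspan : Submodule.span F (Set.range ![w, M.rep]) = ℓ.val := by
    refine Submodule.eq_of_le_of_finrank_eq (Submodule.span_le.mpr ?_)
      ((finrank_span_eq_card hli).trans ℓ.2.symm)
    rw [Matrix.range_cons_cons_empty]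
    exact Set.pair_subset hw (pgMem_iff_rep_mem.mp hM)
  obtain ⟨z, hz⟩ : ∃ z, z ∉ ℓ.val := by
    by_contra! hall
    have h2 := ℓ.2
    rw [Submodule.eq_top_iff'.mpr hall, finrank_top, Module.finrank_fin_fun] at h2
    omega
  let b := basisOfLinearIndependentOfCardEqFinrank
    (linearIndependent_finCons.mpr ⟨hli, hspan ▸ hz⟩) (by simp)
  have hb : ⇑b = ![z, w, M.rep] := coe_basisOfLinearIndependentOfCardEqFinrank _ _
  refine ⟨b, by simp [hb], fun v => ?_⟩
  have hv : b.repr v 0 • z + (b.repr v 1 • w + b.repr v 2 • M.rep) = v := by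
    simpa [Fin.sum_univ_three, hb, add_assoc] using b.sum_repr v
  have htail : b.repr v 1 • w + b.repr v 2 • M.rep ∈ ℓ.val :=
    add_mem (Submodule.smul_mem _ _ hw) (Submodule.smul_mem _ _ (pgMem_iff_rep_mem.mp hM))
  rw [← hv, Submodule.add_mem_iff_left _ htail, hv]
  refine ⟨fun h => by_contra fun hne => hz ((Submodule.smul_mem_iff _ hne).mp h), fun h => ?_⟩
  rw [h, zero_smul]
  exact zero_mem _

lemma mem_iff_exists_smul_eq {ℓ L : PGLine F} (hL : L ≠ ℓ) {v w : Fin 3 → F} (hv : v ≠ 0)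
    (hvℓ : v ∈ ℓ.val) (hvL : v ∈ L.val) (hwℓ : w ∈ ℓ.val) : w ∈ L.val ↔ ∃ c : F, c • v = w := by
  refine ⟨fun hwL => ?_, fun ⟨c, hc⟩ => hc ▸ Submodule.smul_mem _ c hvL⟩
  by_cases hw : w = 0
  · exact ⟨0, by rw [hw, zero_smul]⟩
  · exact (Projectivization.mk_eq_mk_iff' F w v hw hv).mp <|
      common_point_unique hL ((pgMem_mk_iff hw).mpr hwL) ((pgMem_mk_iff hw).mpr hwℓ)
        ((pgMem_mk_iff hv).mpr hvL) ((pgMem_mk_iff hv).mpr hvℓ)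

/-- The representative of `P` at which the first coordinate in the basis `b` is `1`; it is
meaningful when that coordinate does not vanish on `P`. -/
noncomputable def normalizedRep (b : Module.Basis (Fin 3) F (Fin 3 → F)) (P : PGPoint F) :
    Fin 3 → F :=
  (b.repr P.rep 0)⁻¹ • P.rep

lemma normalizedRep_mk {b : Module.Basis (Fin 3) F (Fin 3 → F)} {v : Fin 3 → F} (hv : v ≠ 0)
    (hv1 : b.repr v 0 = 1) : normalizedRep b (Projectivization.mk F v hv) = v := by
  obtain ⟨c, hc⟩ := Projectivization.exists_smul_eq_mk_rep F v hv
  have hc' : (c : F) • v = (Projectivization.mk F v hv).rep := hc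
  rw [normalizedRep, ← hc', map_smul, Finsupp.smul_apply, hv1, smul_smul, smul_eq_mul, mul_one,
    inv_mul_cancel₀ c.ne_zero, one_smul]

section AdaptedBasis

variable {ℓ : PGLine F} {b : Module.Basis (Fin 3) F (Fin 3 → F)}
  (hb : ∀ v, v ∈ ℓ.val ↔ b.repr v 0 = 0)
include hb

lemma repr_normalizedRep {P : PGPoint F} (hP : ¬ pgMem P ℓ) : b.repr (normalizedRep b P) 0 = 1 := by
  rw [pgMem_iff_rep_mem, hb] at hP
  rw [normalizedRep, map_smul, Finsupp.smul_apply, smul_eq_mul, inv_mul_cancel₀ hP]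

lemma pgMem_iff_normalizedRep_mem {P : PGPoint F} (hP : ¬ pgMem P ℓ) {L : PGLine F} :
    pgMem P L ↔ normalizedRep b P ∈ L.val := by
  rw [pgMem_iff_rep_mem, hb] at hP
  rw [pgMem_iff_rep_mem, normalizedRep, Submodule.smul_mem_iff _ (inv_ne_zero hP)]

lemma mem_pgJoin_iff_exists_smul_eq {Q R : PGPoint F} (hQ : ¬ pgMem Q ℓ) (hR : ¬ pgMem R ℓ)
    {v : Fin 3 → F} (hv : v ≠ 0) (hv0 : b.repr v 0 = 0) :
    pgMem Q (pgJoin R (Projectivization.mk F v hv)) ↔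
      ∃ c : F, c • v = normalizedRep b Q - normalizedRep b R := by
  have hdiff : normalizedRep b Q - normalizedRep b R ∈ ℓ.val := by
    rw [hb, map_sub, Finsupp.sub_apply, repr_normalizedRep hb hQ, repr_normalizedRep hb hR,
      sub_self]
  rw [← mem_iff_exists_smul_eq (pgJoin_ne hR _) hv ((hb v).mpr hv0)
    ((pgMem_mk_iff hv).mp (right_mem_pgJoin R _)) hdiff, pgMem_iff_normalizedRep_mem hb hQ,
    Submodule.sub_mem_iff_left _
      ((pgMem_iff_normalizedRep_mem hb hR).mp (left_mem_pgJoin R _))]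

end AdaptedBasis

lemma smul_eq_iff_repr (b : Module.Basis (Fin 3) F (Fin 3 → F)) {v w : Fin 3 → F} {c : F} :
    c • v = w ↔ c * b.repr v 0 = b.repr w 0 ∧ c * b.repr v 1 = b.repr w 1 ∧
      c * b.repr v 2 = b.repr w 2 := by
  simp [← b.repr.injective.eq_iff, Finsupp.ext_iff, Fin.forall_fin_succ]

lemma basis_add_smul_ne_zero (b : Module.Basis (Fin 3) F (Fin 3 → F)) (u : F) :
    b 1 + u • b 2 ≠ 0 := fun h => by
  simpa using congrArg (fun v => b.repr v 1) h

lemma exists_mk_add_smul_eq_iff {ℓ : PGLine F} {M : PGPoint F}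
    {b : Module.Basis (Fin 3) F (Fin 3 → F)} (hb : ∀ v, v ∈ ℓ.val ↔ b.repr v 0 = 0)
    (hM : b 2 = M.rep) (P : PGPoint F) :
    (∃ u : F, Projectivization.mk F (b 1 + u • b 2) (basis_add_smul_ne_zero b u) = P) ↔
      pgMem P ℓ ∧ P ≠ M := by
  have hmk : ∀ P : PGPoint F, P = Projectivization.mk F P.rep P.rep_nonzero :=
    fun P => P.mk_rep.symm
  constructor
  · rintro ⟨u, rfl⟩
    refine ⟨(pgMem_mk_iff _).mpr ((hb _).mpr (by simp)), fun h => ?_⟩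
    rw [hmk M, Projectivization.mk_eq_mk_iff', ← hM] at h
    simp only [smul_eq_iff_repr b] at h
    simp at h
  · rintro ⟨hP, hPM⟩
    rw [pgMem_iff_rep_mem, hb] at hP
    have h1 : b.repr P.rep 1 ≠ 0 := fun h1 => by
      refine hPM ?_
      rw [hmk P, hmk M, Projectivization.mk_eq_mk_iff', ← hM]
      exact ⟨b.repr P.rep 2, (smul_eq_iff_repr b).mpr (by simp [hP, h1])⟩
    refine ⟨b.repr P.rep 2 / b.repr P.rep 1, ?_⟩
    rw [hmk P, Projectivization.mk_eq_mk_iff']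
    refine ⟨(b.repr P.rep 1)⁻¹, (smul_eq_iff_repr b).mpr ?_⟩
    simp [hP, h1, div_eq_inv_mul]

lemma nonempty_affineChart {ℓ : PGLine F} {M : PGPoint F} (hM : pgMem M ℓ) :
    Nonempty (AffineChart ℓ M) := by
  obtain ⟨b, hbM, hb⟩ := exists_adapted_basis hM
  have hM_mk : M = Projectivization.mk F (b 2) (b.ne_zero 2) := by
    simp only [hbM, Projectivization.mk_rep]
  refine ⟨{
    x := fun Q => b.repr (normalizedRep b Q) 1
    y := fun Q => b.repr (normalizedRep b Q) 2
    dir := fun u => Projectivization.mk F (b 1 + u • b 2) (basis_add_smul_ne_zero b u)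
    dir_injective := fun u u' h => ?_
    mem_range_dir := exists_mk_add_smul_eq_iff hb hbM
    exists_coords := fun c d => ?_
    mem_join_dir := fun u Q R hQ hR => ?_
    mem_join_vertical := fun Q R hQ hR => ?_ }⟩
  · obtain ⟨c, hc⟩ := (Projectivization.mk_eq_mk_iff' F _ _ _ _).mp h
    obtain ⟨-, h1, h2⟩ := (smul_eq_iff_repr b).mp hc
    obtain rfl : c = 1 := by simpa using h1
    simpa using h2.symm
  · have h1 : b.repr (b 0 + c • b 1 + d • b 2) 0 = 1 := by simp
    have h0 : b 0 + c • b 1 + d • b 2 ≠ 0 := fun h => by simp [h] at h1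
    refine ⟨Projectivization.mk F _ h0, ?_, ?_, ?_⟩
    · rw [pgMem_mk_iff, hb, h1]
      exact one_ne_zero
    all_goals simp [normalizedRep_mk h0 h1]
  · have slope_iff : ∀ a a' c c' : F, c - u * a = c' - u * a' ↔ (a - a') * u = c - c' :=
      fun _ _ _ _ => by constructor <;> intro h <;> linear_combination -h
    simp [mem_pgJoin_iff_exists_smul_eq hb hQ hR (basis_add_smul_ne_zero b u) (by simp),
      smul_eq_iff_repr b, repr_normalizedRep hb hQ, repr_normalizedRep hb hR, slope_iff,
      -smul_add]
  · simp [hM_mk, mem_pgJoin_iff_exists_smul_eq hb hQ hR (b.ne_zero 2) (by simp),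
      smul_eq_iff_repr b, repr_normalizedRep hb hQ, repr_normalizedRep hb hR,
      eq_comm (a := (0 : F)), sub_eq_zero]

end Incidence

section Counting

variable {F : Type*} [Field F]

lemma eq_of_pgMeet_eq {ℓ L L' : PGLine F} {N : PGPoint F} (hN : ¬ pgMem N ℓ) (hL : pgMem N L)
    (hL' : pgMem N L') (h : pgMeet L ℓ = pgMeet L' ℓ) : L = L' := by
  have hne : N ≠ pgMeet L ℓ := fun hNL => hN (hNL ▸ pgMeet_mem_right L ℓ)
  exact line_unique hne hL (pgMeet_mem_left L ℓ) hL' (h ▸ pgMeet_mem_left L' ℓ)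

lemma injOn_pgMeet_pgJoin {ℓ m : PGLine F} {N : PGPoint F} (hNℓ : ¬ pgMem N ℓ)
    (hNm : ¬ pgMem N m) : Set.InjOn (fun Q => pgMeet (pgJoin Q N) ℓ) {Q | pgMem Q m} := by
  intro Q hQ Q' hQ' h
  have hjoin : pgJoin Q N = pgJoin Q' N :=
    eq_of_pgMeet_eq hNℓ (right_mem_pgJoin Q N) (right_mem_pgJoin Q' N) h
  have hne : pgJoin Q N ≠ m := fun h => hNm (h ▸ right_mem_pgJoin Q N)
  exact common_point_unique hne (left_mem_pgJoin Q N) hQ (hjoin ▸ left_mem_pgJoin Q' N) hQ'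

lemma pgMeet_pgJoin_ne {ℓ m : PGLine F} {N Q : PGPoint F} (hQℓ : ¬ pgMem Q ℓ) (hQm : pgMem Q m)
    (hNm : ¬ pgMem N m) : pgMeet (pgJoin Q N) ℓ ≠ pgMeet m ℓ := fun h =>
  hNm (eq_of_pgMeet_eq hQℓ (left_mem_pgJoin Q N) hQm h ▸ right_mem_pgJoin Q N)

lemma pgJoin_injOn {R : PGPoint F} {ℓ : PGLine F} (hR : ¬ pgMem R ℓ) :
    Set.InjOn (pgJoin R) {E | pgMem E ℓ} := fun E hE E' hE' h =>
  common_point_unique (pgJoin_ne hR E) (right_mem_pgJoin R E) hE (h ▸ right_mem_pgJoin R E') hE'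

lemma eq_pgJoin_pgMeet {R : PGPoint F} {L ℓ : PGLine F} (hR : ¬ pgMem R ℓ) (hRL : pgMem R L) :
    L = pgJoin R (pgMeet L ℓ) := by
  have hne : R ≠ pgMeet L ℓ := fun h => hR (h ▸ pgMeet_mem_right L ℓ)
  exact eq_pgJoin hne hRL (pgMeet_mem_left L ℓ)

lemma pgMeet_pgJoin_eq_iff {ℓ : PGLine F} {Q R E : PGPoint F} (hR : ¬ pgMem R ℓ) (hQR : Q ≠ R)
    (hE : pgMem E ℓ) : pgMeet (pgJoin R Q) ℓ = E ↔ pgMem Q (pgJoin R E) := by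
  have hRE : R ≠ E := fun h => hR (h ▸ hE)
  constructor
  · rintro rfl
    rw [← eq_pgJoin hRE (left_mem_pgJoin R Q) (pgMeet_mem_left _ _)]
    exact right_mem_pgJoin R Q
  · intro hQ
    refine common_point_unique (pgJoin_ne hR Q) (pgMeet_mem_left _ _) (pgMeet_mem_right _ _) ?_ hE
    rw [← eq_pgJoin hQR.symm (left_mem_pgJoin R E) hQ]
    exact right_mem_pgJoin R E

lemma nsec_eq_one_iff {S : Set (PGPoint F)} {P : PGPoint F} {L : PGLine F} (hP : P ∈ S)
    (hPL : pgMem P L) : nsec S L = 1 ↔ ∀ Q ∈ S, pgMem Q L → Q = P := by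
  rw [nsec, Set.ncard_eq_one]
  constructor
  · rintro ⟨R, hR⟩ Q hQ hQL
    have hPR : P ∈ ({R} : Set (PGPoint F)) := hR ▸ ⟨hP, hPL⟩
    have hQR : Q ∈ ({R} : Set (PGPoint F)) := hR ▸ ⟨hQ, hQL⟩
    exact hQR.trans hPR.symm
  · exact fun h => ⟨P, Set.eq_singleton_iff_unique_mem.mpr ⟨⟨hP, hPL⟩, fun Q hQ => h Q hQ.1 hQ.2⟩⟩

lemma exists_ne_of_one_lt_nsec {S : Set (PGPoint F)} {L : PGLine F} (h : 1 < nsec S L)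
    (P : PGPoint F) : ∃ Q ∈ S, pgMem Q L ∧ Q ≠ P := by
  obtain ⟨Q, hQ, hQP⟩ := Set.exists_ne_of_one_lt_ncard h P
  exact ⟨Q, hQ.1, hQ.2, hQP⟩

open Classical in
lemma nsec_coe (V : Finset (PGPoint F)) (L : PGLine F) :
    nsec (V : Set (PGPoint F)) L = #{Q ∈ V | pgMem Q L} := by
  rw [nsec, ← Set.ncard_coe_finset, coe_filter]
  rfl

lemma one_le_nsec [Finite F] {S : Set (PGPoint F)} {R : PGPoint F} {L : PGLine F} (hR : R ∈ S)
    (hRL : pgMem R L) : 1 ≤ nsec S L :=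
  (Set.ncard_pos (Set.toFinite _)).mpr ⟨R, hR, hRL⟩

open Classical in
lemma nsec_insert [Finite F] {S : Set (PGPoint F)} {N : PGPoint F} (hN : N ∉ S) (L : PGLine F) :
    nsec (insert N S) L = nsec S L + if pgMem N L then 1 else 0 := by
  have hsep : {Q ∈ insert N S | pgMem Q L} =
      if pgMem N L then insert N {Q ∈ S | pgMem Q L} else {Q ∈ S | pgMem Q L} := by
    ext Q
    split_ifs <;> by_cases hQ : Q = N <;> simp_all
  rw [nsec, hsep]
  split_ifs with hNL
  · exact Set.ncard_insert_of_notMem (fun h => hN h.1) (Set.toFinite _)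
  · rfl

variable [Fintype F]

/-- The set of points of a line, as a finset. -/
noncomputable def pointsOn (ℓ : PGLine F) : Finset (PGPoint F) :=
  (Set.toFinite {P | pgMem P ℓ}).toFinset

@[simp]
lemma mem_pointsOn {P : PGPoint F} {ℓ : PGLine F} : P ∈ pointsOn ℓ ↔ pgMem P ℓ := by
  simp [pointsOn]

lemma card_pointsOn (ℓ : PGLine F) : #(pointsOn ℓ) = Fintype.card F + 1 := by
  classical
  obtain ⟨M, hM, -⟩ := exists_common_point ℓ ℓ
  obtain ⟨χ⟩ := nonempty_affineChart hM
  have hℓ : pointsOn ℓ = insert M (univ.image χ.dir) := by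
    ext P
    have := χ.mem_range_dir P
    by_cases hP : P = M <;> simp_all
  have hM_notMem : M ∉ univ.image χ.dir := fun h =>
    ((χ.mem_range_dir M).mp (by simpa using h)).2 rfl
  rw [hℓ, card_insert_of_notMem hM_notMem, card_image_of_injective _ χ.dir_injective, card_univ]

lemma sum_nsec_pgJoin {V : Set (PGPoint F)} {ℓ : PGLine F} {R : PGPoint F} (hRV : R ∈ V)
    (hR : ¬ pgMem R ℓ) : ∑ E ∈ pointsOn ℓ, nsec V (pgJoin R E) = V.ncard + Fintype.card F := by
  classical
  lift V to Finset (PGPoint F) using V.toFinite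
  have hfiber : #(V.erase R) =
      ∑ E ∈ pointsOn ℓ, #{Q ∈ V.erase R | pgMeet (pgJoin R Q) ℓ = E} :=
    card_eq_sum_card_fiberwise fun Q _ => mem_pointsOn.mpr (pgMeet_mem_right _ _)
  have hnsec : ∀ E ∈ pointsOn ℓ, nsec (V : Set (PGPoint F)) (pgJoin R E) =
      #{Q ∈ V.erase R | pgMeet (pgJoin R Q) ℓ = E} + 1 := fun E hE => by
    rw [nsec_coe, ← card_erase_add_one (mem_filter.mpr ⟨hRV, left_mem_pgJoin R E⟩),
      ← filter_erase]
    congr 2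
    refine filter_congr fun Q hQ => ?_
    rw [pgMeet_pgJoin_eq_iff hR (ne_of_mem_erase hQ) (mem_pointsOn.mp hE)]
  rw [sum_congr rfl hnsec, sum_add_distrib, ← hfiber, sum_const, card_pointsOn, smul_eq_mul,
    mul_one, Set.ncard_coe_finset, ← card_erase_add_one (mem_coe.mp hRV)]
  ring

lemma nsec_eq_one_of_forall_exists_mem {V : Set (PGPoint F)} {ℓ : PGLine F} {P : PGPoint F}
    (hV : V.ncard = Fintype.card F) (hVℓ : ∀ Q ∈ V, ¬ pgMem Q ℓ) (hP : pgMem P ℓ)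
    (hmeet : ∀ L ≠ ℓ, pgMem P L → ∃ Q ∈ V, pgMem Q L) {L : PGLine F} (hL : L ≠ ℓ)
    (hPL : pgMem P L) : nsec V L = 1 := by
  lift V to Finset (PGPoint F) using V.toFinite
  obtain ⟨χ⟩ := nonempty_affineChart hP
  have hsurj : Set.SurjOn χ.x V (univ : Finset F) := fun c _ => by
    obtain ⟨A, hA, rfl, -⟩ := χ.exists_coords c 0
    obtain ⟨Q, hQ, hQA⟩ := hmeet _ (pgJoin_ne hA P) (right_mem_pgJoin A P)
    exact ⟨Q, hQ, (χ.mem_join_vertical Q A (hVℓ Q hQ) hA).mp hQA⟩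
  have hinj : Set.InjOn χ.x V := by
    refine injOn_of_surjOn_of_card_le _ (fun _ _ => mem_coe.mpr (mem_univ _)) hsurj ?_
    rw [card_univ, ← hV, Set.ncard_coe_finset]
  obtain ⟨R, hR, hRL⟩ := hmeet L hL hPL
  refine (nsec_eq_one_iff hR hRL).mpr fun Q hQ hQL => hinj hQ hR ?_
  have hRP : R ≠ P := fun h => hVℓ R hR (h ▸ hP)
  exact (χ.mem_join_vertical Q R (hVℓ Q hQ) (hVℓ R hR)).mp (eq_pgJoin hRP hRL hPL ▸ hQL)

lemma ncard_le_of_concurrent_tangents {S : Set (PGPoint F)} {ℓ : PGLine F} {N : PGPoint F}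
    (hN : ¬ pgMem N ℓ) (htan : ∀ P ∈ S, ∃ t, pgMem P t ∧ pgMem N t ∧ nsec S t = 1) :
    S.ncard ≤ Fintype.card F + 1 := by
  have : Nonempty (PGLine F) := ⟨ℓ⟩
  choose! t hPt hNt ht using htan
  rw [← card_pointsOn ℓ, ← Set.ncard_coe_finset]
  refine Set.ncard_le_ncard_of_injOn (fun P => pgMeet (t P) ℓ)
    (fun P _ => mem_coe.mpr (mem_pointsOn.mpr (pgMeet_mem_right _ _))) fun P hP P' hP' h => ?_
  have htt : t P = t P' := eq_of_pgMeet_eq hN (hNt P hP) (hNt P' hP') h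
  exact (nsec_eq_one_iff hP' (hPt P' hP')).mp (ht P' hP') P hP (htt ▸ hPt P hP)

end Counting

section SlopePolynomial

variable {F : Type*} [Field F]

lemma sum_eval_eq_zero_of_natDegree_lt [Fintype F] {f : F[X]}
    (hf : f.natDegree < Fintype.card F - 1) : ∑ u : F, f.eval u = 0 := by
  simp_rw [eval_eq_sum_range' hf]
  rw [sum_comm]
  refine sum_eq_zero fun i hi => ?_
  rw [← mul_sum, FiniteField.sum_pow_lt_card_sub_one F i (mem_range.mp hi), mul_zero]

lemma prod_erase_zero_eq_neg_one [Fintype F] [DecidableEq F] :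
    ∏ c ∈ (univ : Finset F).erase 0, c = -1 := by
  have h := congrArg (Units.val : Fˣ → F) (FiniteField.prod_univ_units_id_eq_neg_one (K := F))
  rw [Units.coe_prod, Units.val_neg, Units.val_one] at h
  rw [← h]
  symm
  refine prod_bij (fun v _ => (v : F)) (by simp) (fun _ _ _ _ h => Units.ext h) ?_ (by simp)
  exact fun c hc => ⟨Units.mk0 c (mem_erase.mp hc).1, mem_univ _, rfl⟩

lemma count_roots_C_sub_C_mul_X [DecidableEq F] {b c u : F} (h : C b - C c * X ≠ 0) :
    (C b - C c * X : F[X]).roots.count u = if b = u * c then 1 else 0 := by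
  by_cases hc : c = 0
  · subst hc
    have hb : b ≠ 0 := fun hb => h (by simp [hb])
    simp [hb]
  · have hfac : (C b - C c * X : F[X]) = C (-c) * (X - C (b / c)) := by
      rw [mul_sub, ← C_mul, neg_mul, mul_div_cancel₀ b hc, C_neg, C_neg]
      ring
    rw [hfac, roots_C_mul _ (neg_ne_zero.mpr hc), roots_X_sub_C, Multiset.count_singleton]
    simp only [eq_div_iff hc, eq_comm]

variable {ι : Type*}

open Classical in
/-- The number of points of `V` on the line of slope `u` through `R`, where a point `Q` has the
affine coordinates `(x Q, y Q)`. -/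
noncomputable def slopeCount (V : Finset ι) (x y : ι → F) (R : ι) (u : F) : ℕ :=
  #{Q ∈ V | y Q - u * x Q = y R - u * x R}

open Classical in
/-- The product of the linear polynomials in the slope `u` which vanish when a point `Q ∈ V`,
`Q ≠ R`, lies on the line of slope `u` through `R`. -/
noncomputable def slopePoly (V : Finset ι) (x y : ι → F) (R : ι) : F[X] :=
  ∏ Q ∈ V.erase R, (C (y Q - y R) - C (x Q - x R) * X)

variable {V : Finset ι} {x y : ι → F} {R : ι}

open Classical in
lemma slopeCount_eq_card_filter_erase_add_one (hR : R ∈ V) (u : F) :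
    slopeCount V x y R u = #{Q ∈ V.erase R | y Q - y R = u * (x Q - x R)} + 1 := by
  have hmem : R ∈ {Q ∈ V | y Q - u * x Q = y R - u * x R} := mem_filter.mpr ⟨hR, rfl⟩
  rw [slopeCount, ← card_erase_add_one hmem, ← filter_erase]
  congr 2
  refine filter_congr fun Q _ => ?_
  constructor <;> intro h <;> linear_combination h

open Classical in
lemma eval_slopePoly (u : F) :
    (slopePoly V x y R).eval u = ∏ Q ∈ V.erase R, ((y Q - u * x Q) - (y R - u * x R)) := by
  rw [slopePoly, eval_prod]
  refine prod_congr rfl fun Q _ => ?_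
  simp only [eval_sub, eval_C, eval_mul, eval_X]
  ring

lemma eval_slopePoly_ne_zero_iff (hR : R ∈ V) (u : F) :
    (slopePoly V x y R).eval u ≠ 0 ↔ slopeCount V x y R u = 1 := by
  classical
  rw [slopeCount_eq_card_filter_erase_add_one hR, Nat.add_eq_right, card_eq_zero,
    filter_eq_empty_iff, eval_slopePoly, prod_ne_zero_iff]
  refine forall₂_congr fun Q _ => not_congr ?_
  constructor <;> intro h <;> linear_combination h

lemma rootMultiplicity_slopePoly_add_one (hR : R ∈ V) (h0 : slopePoly V x y R ≠ 0) (u : F) :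
    (slopePoly V x y R).rootMultiplicity u + 1 = slopeCount V x y R u := by
  classical
  rw [slopeCount_eq_card_filter_erase_add_one hR, card_filter, ← count_roots, slopePoly,
    roots_prod _ _ h0, Multiset.count_bind]
  rw [slopePoly, prod_ne_zero_iff] at h0
  exact congrArg (· + 1) (sum_congr rfl fun Q hQ => count_roots_C_sub_C_mul_X (h0 Q hQ))

open Classical in
lemma natDegree_slopePoly_add_card_le :
    (slopePoly V x y R).natDegree + #{Q ∈ V | x Q = x R} ≤ #V := by
  have hdeg : (slopePoly V x y R).natDegree ≤ #{Q ∈ V | ¬ x Q = x R} := by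
    rw [card_filter]
    refine (natDegree_prod_le _ _).trans <|
      (sum_le_sum fun Q _ => ?_).trans (sum_le_sum_of_subset (erase_subset R V))
    split_ifs with h
    · rw [h]
      simp
    · compute_degree
  have := card_filter_add_card_filter_not (s := V) (fun Q => x Q = x R)
  omega

variable [Fintype F]

-- At an undetermined slope the intercepts of the points of `V` run through all of `F`.
lemma eval_slopePoly_eq_neg_one (hV : #V = Fintype.card F) (hR : R ∈ V) {u : F}
    (hu : ∀ Q ∈ V, slopeCount V x y Q u = 1) : (slopePoly V x y R).eval u = -1 := by
  classical
  set g : ι → F := fun Q => (y Q - u * x Q) - (y R - u * x R)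
  have hinj : Set.InjOn g V := fun Q hQ Q' hQ' h =>
    card_le_one.mp (hu Q hQ).le Q (by simpa using hQ) Q' <| by
      simpa using ⟨hQ', (sub_left_injective h).symm⟩
  have himage : (V.erase R).image g = univ.erase 0 := by
    have hgR : g R = 0 := sub_self _
    have huniv : V.image g = univ := by
      rw [← card_eq_iff_eq_univ, card_image_of_injOn hinj, hV]
    rw [← huniv, ← hgR]
    ext c
    simp only [mem_image, mem_erase]
    constructor
    · rintro ⟨Q, ⟨hQR, hQ⟩, rfl⟩
      exact ⟨fun h => hQR (hinj hQ hR h), Q, hQ, rfl⟩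
    · rintro ⟨hc, Q, hQ, rfl⟩
      exact ⟨Q, ⟨fun h => hc (h ▸ rfl), hQ⟩, rfl⟩
  rw [eval_slopePoly, ← prod_erase_zero_eq_neg_one, ← himage,
    prod_image (hinj.mono (coe_subset.mpr (erase_subset R V)))]

variable {T : Finset F}

open Classical in
/-- The slopes outside `T` of the lines meeting `V` in the point `R` only; `T` is meant to consist
of slopes not determined by `V`. -/
noncomputable def tangentSlopes (V : Finset ι) (x y : ι → F) (T : Finset F) (R : ι) : Finset F :=
  {u ∈ Tᶜ | slopeCount V x y R u = 1}

open Classical in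
lemma eval_slopePoly_eq_zero (hR : R ∈ V) {u : F} (huT : u ∉ T)
    (hu : u ∉ tangentSlopes V x y T R) : (slopePoly V x y R).eval u = 0 :=
  not_ne_iff.mp <| (eval_slopePoly_ne_zero_iff hR u).not.mpr fun h =>
    hu (mem_filter.mpr ⟨mem_compl.mpr huT, h⟩)

open Classical in
lemma sum_tangentSlopes_eval_slopePoly (hV : #V = Fintype.card F) (hR : R ∈ V)
    (hvert : 2 ≤ #{Q ∈ V | x Q = x R}) (hT : ∀ u ∈ T, ∀ Q ∈ V, slopeCount V x y Q u = 1) :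
    ∑ u ∈ tangentSlopes V x y T R, (slopePoly V x y R).eval u = #T := by
  have hdeg := natDegree_slopePoly_add_card_le (V := V) (x := x) (y := y) (R := R)
  have hsum : ∑ u, (slopePoly V x y R).eval u = 0 :=
    sum_eval_eq_zero_of_natDegree_lt (by omega)
  have hsumT : ∑ u ∈ T, (slopePoly V x y R).eval u = -#T := by
    rw [sum_congr rfl fun u hu => eval_slopePoly_eq_neg_one hV hR (hT u hu), sum_const,
      nsmul_eq_mul, mul_neg_one]
  have hsumTc : ∑ u ∈ tangentSlopes V x y T R, (slopePoly V x y R).eval u =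
      ∑ u ∈ Tᶜ, (slopePoly V x y R).eval u :=
    sum_subset (filter_subset _ _) fun u huT hu =>
      eval_slopePoly_eq_zero hR (mem_compl.mp huT) hu
  rw [← sum_add_sum_compl T, hsumT] at hsum
  linear_combination hsumTc + hsum

open Classical in
lemma card_cast_eq_zero_iff_tangentSlopes_eq_empty (hV : #V = Fintype.card F) (hR : R ∈ V)
    (hvert : 2 ≤ #{Q ∈ V | x Q = x R}) (hT : ∀ u ∈ T, ∀ Q ∈ V, slopeCount V x y Q u = 1)
    (htan : #(tangentSlopes V x y T R) ≤ 1) :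
    (#T : F) = 0 ↔ tangentSlopes V x y T R = ∅ := by
  rw [← sum_tangentSlopes_eval_slopePoly hV hR hvert hT]
  refine ⟨fun hsum => eq_empty_of_forall_notMem fun d hd => ?_, fun h => by rw [h, sum_empty]⟩
  rw [eq_singleton_iff_unique_mem.mpr ⟨hd, fun u hu => card_le_one.mp htan u hu d hd⟩,
    sum_singleton] at hsum
  exact (eval_slopePoly_ne_zero_iff hR d).mpr (mem_filter.mp hd).2 hsum

open Classical in
-- The two slope polynomials have degree at most `q - 3` and agree at `q - 2` slopes or more.
lemma slopeCount_eq_of_x_eq {R' : ι} (hV : #V = Fintype.card F) (hR : R ∈ V) (hR' : R' ∈ V)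
    (hx : x R' = x R) (hvert : 3 ≤ #{Q ∈ V | x Q = x R}) (hTne : T.Nonempty)
    (hT : ∀ u ∈ T, ∀ Q ∈ V, slopeCount V x y Q u = 1)
    (htan : #(tangentSlopes V x y T R) ≤ 1) (htan' : #(tangentSlopes V x y T R') ≤ 1) (u : F) :
    slopeCount V x y R u = slopeCount V x y R' u := by
  set B := tangentSlopes V x y T R ∪ tangentSlopes V x y T R' with hB
  have hcard : Fintype.card F ≤ #Bᶜ + 2 := by
    have hB_le : #B ≤ #(tangentSlopes V x y T R) + #(tangentSlopes V x y T R') := card_union_le _ _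
    have hB_compl : #B + #Bᶜ = Fintype.card F := card_add_card_compl B
    omega
  have hdeg := natDegree_slopePoly_add_card_le (V := V) (x := x) (y := y) (R := R)
  have hdeg' := natDegree_slopePoly_add_card_le (V := V) (x := x) (y := y) (R := R')
  rw [hx] at hdeg'
  have heval : ∀ u ∈ Bᶜ, (slopePoly V x y R).eval u = (slopePoly V x y R').eval u := by
    intro u hu
    rw [hB, mem_compl, notMem_union] at hu
    by_cases huT : u ∈ T
    · rw [eval_slopePoly_eq_neg_one hV hR (hT u huT), eval_slopePoly_eq_neg_one hV hR' (hT u huT)]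
    · rw [eval_slopePoly_eq_zero hR huT hu.1, eval_slopePoly_eq_zero hR' huT hu.2]
  have hpoly : slopePoly V x y R = slopePoly V x y R' :=
    eq_of_degrees_lt_of_eval_finset_eq Bᶜ
      (degree_le_natDegree.trans_lt (by norm_cast; omega))
      (degree_le_natDegree.trans_lt (by norm_cast; omega)) heval
  have hne : slopePoly V x y R ≠ 0 := by
    obtain ⟨v, hv⟩ := hTne
    intro h
    simpa [h] using eval_slopePoly_eq_neg_one hV hR (hT v hv)
  rw [← rootMultiplicity_slopePoly_add_one hR hne,
    ← rootMultiplicity_slopePoly_add_one hR' (hpoly ▸ hne), hpoly]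

end SlopePolynomial

section UndeterminedDirections

variable {F : Type*} [Field F]

/-- The points `E` of the line `ℓ` outside `D` for which the line `RE` meets `V` in one point; for
`R ∈ V` they are the directions of the tangents to `V` at `R`. -/
def tangentDirections (ℓ : PGLine F) (V D : Set (PGPoint F)) (R : PGPoint F) :
    Set (PGPoint F) :=
  {E | (pgMem E ℓ ∧ E ∉ D) ∧ nsec V (pgJoin R E) = 1}

namespace AffineChart

variable {ℓ : PGLine F} {M R : PGPoint F} (χ : AffineChart ℓ M) {V : Finset (PGPoint F)}

lemma dir_mem (u : F) : pgMem (χ.dir u) ℓ := ((χ.mem_range_dir _).mp ⟨u, rfl⟩).1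

lemma slopeCount_eq_nsec (hV : ∀ Q ∈ V, ¬ pgMem Q ℓ) (hR : R ∈ V) (u : F) :
    slopeCount V χ.x χ.y R u = nsec (V : Set (PGPoint F)) (pgJoin R (χ.dir u)) := by
  classical
  rw [nsec_coe, slopeCount]
  exact congrArg card <|
    filter_congr fun Q hQ => (χ.mem_join_dir u Q R (hV Q hQ) (hV R hR)).symm

open Classical in
lemma card_filter_x_eq_nsec (hV : ∀ Q ∈ V, ¬ pgMem Q ℓ) (hR : R ∈ V) :
    #{Q ∈ V | χ.x Q = χ.x R} = nsec (V : Set (PGPoint F)) (pgJoin R M) := by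
  rw [nsec_coe]
  exact congrArg card <|
    filter_congr fun Q hQ => (χ.mem_join_vertical Q R (hV Q hQ) (hV R hR)).symm

variable [Fintype F] {D : Set (PGPoint F)}

open Classical in
/-- The slopes of the points of `D` other than the vertical direction. -/
noncomputable def slopes (D : Set (PGPoint F)) : Finset F := {u | χ.dir u ∈ D}

@[simp]
lemma mem_slopes {u : F} : u ∈ χ.slopes D ↔ χ.dir u ∈ D := by
  simp [slopes]

lemma card_slopes (hD : ∀ E ∈ D, pgMem E ℓ) (hM : M ∉ D) : #(χ.slopes D) = D.ncard := by
  have hpre : (χ.slopes D : Set F) = χ.dir ⁻¹' D := by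
    ext u
    simp
  rw [← Set.ncard_coe_finset, hpre]
  exact Set.ncard_preimage_of_injective_subset_range χ.dir_injective fun E hE =>
    (χ.mem_range_dir E).mpr ⟨hD E hE, fun h => hM (h ▸ hE)⟩

lemma mem_tangentSlopes_iff (hV : ∀ Q ∈ V, ¬ pgMem Q ℓ) (hR : R ∈ V) {u : F} :
    u ∈ tangentSlopes V χ.x χ.y (χ.slopes D) R ↔ χ.dir u ∈ tangentDirections ℓ V D R := by
  simp [tangentSlopes, tangentDirections, χ.slopeCount_eq_nsec hV hR, χ.dir_mem]

lemma card_tangentSlopes_le_one (hV : ∀ Q ∈ V, ¬ pgMem Q ℓ) (hR : R ∈ V)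
    (htan : (tangentDirections ℓ V D R).Subsingleton) :
    #(tangentSlopes V χ.x χ.y (χ.slopes D) R) ≤ 1 :=
  card_le_one.mpr fun _ hu _ hu' => χ.dir_injective <|
    htan ((χ.mem_tangentSlopes_iff hV hR).mp hu) ((χ.mem_tangentSlopes_iff hV hR).mp hu')

end AffineChart

variable [Fintype F]

/-- `V` is a set of `q` points off the line `ℓ`, that is, in the affine plane with line at infinity
`ℓ`, and no direction in `D ⊆ ℓ` is determined by `V`, that is, lies on a line joining two points
of `V`. -/
structure HasUndeterminedDirections (ℓ : PGLine F) (V D : Set (PGPoint F)) : Prop where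
  ncard_eq : V.ncard = Fintype.card F
  affine : ∀ Q ∈ V, ¬ pgMem Q ℓ
  infinite : ∀ E ∈ D, pgMem E ℓ
  nsec_eq_one : ∀ E ∈ D, ∀ Q ∈ V, nsec V (pgJoin Q E) = 1

namespace HasUndeterminedDirections

variable {ℓ : PGLine F} {V D : Set (PGPoint F)} {R R' M : PGPoint F}

lemma notMem_of_two_le (h : HasUndeterminedDirections ℓ V D) (hR : R ∈ V)
    (htwo : 2 ≤ nsec V (pgJoin R M)) : M ∉ D := fun hMD => by
  rw [h.nsec_eq_one M hMD R hR] at htwo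
  omega

lemma ncard_cast_eq_zero_iff (h : HasUndeterminedDirections ℓ V D) (hR : R ∈ V)
    (hM : pgMem M ℓ) (htwo : 2 ≤ nsec V (pgJoin R M))
    (htan : (tangentDirections ℓ V D R).Subsingleton) :
    (D.ncard : F) = 0 ↔ tangentDirections ℓ V D R = ∅ := by
  classical
  obtain ⟨χ⟩ := nonempty_affineChart hM
  have hMD := h.notMem_of_two_le hR htwo
  lift V to Finset (PGPoint F) using V.toFinite
  rw [← χ.card_slopes h.infinite hMD, card_cast_eq_zero_iff_tangentSlopes_eq_empty
    ((Set.ncard_coe_finset V).symm.trans h.ncard_eq) hR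
    (htwo.trans_eq (χ.card_filter_x_eq_nsec h.affine hR).symm)
    (fun u hu Q hQ => (χ.slopeCount_eq_nsec h.affine hQ u).trans
      (h.nsec_eq_one _ (χ.mem_slopes.mp hu) Q hQ))
    (χ.card_tangentSlopes_le_one h.affine hR htan), eq_empty_iff_forall_notMem,
    Set.eq_empty_iff_forall_notMem]
  simp only [χ.mem_tangentSlopes_iff h.affine hR]
  refine ⟨fun hempty E hE => ?_, fun hempty u => hempty _⟩
  have hEM : E ≠ M := by
    rintro rfl
    have := hE.2
    omega
  obtain ⟨u, rfl⟩ := (χ.mem_range_dir E).mpr ⟨hE.1.1, hEM⟩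
  exact hempty u hE

lemma nsec_pgJoin_eq (h : HasUndeterminedDirections ℓ V D) (hD : D.Nonempty) (hR : R ∈ V)
    (hR' : R' ∈ V) (hM : pgMem M ℓ) (hR'M : pgMem R' (pgJoin R M))
    (hthree : 3 ≤ nsec V (pgJoin R M)) (htan : (tangentDirections ℓ V D R).Subsingleton)
    (htan' : (tangentDirections ℓ V D R').Subsingleton) {E : PGPoint F} (hE : pgMem E ℓ) :
    nsec V (pgJoin R E) = nsec V (pgJoin R' E) := by
  classical
  by_cases hEM : E = M
  · have hR'E : R' ≠ M := fun hR'M => h.affine R' hR' (hR'M ▸ hM)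
    rw [hEM, eq_pgJoin hR'E hR'M (right_mem_pgJoin R M)]
  obtain ⟨χ⟩ := nonempty_affineChart hM
  have hMD := h.notMem_of_two_le hR (by omega : 2 ≤ nsec V (pgJoin R M))
  obtain ⟨u, rfl⟩ := (χ.mem_range_dir E).mpr ⟨hE, hEM⟩
  obtain ⟨E', hE'⟩ := hD
  obtain ⟨u', rfl⟩ :=
    (χ.mem_range_dir E').mpr ⟨h.infinite E' hE', fun hE'M => hMD (hE'M ▸ hE')⟩
  lift V to Finset (PGPoint F) using V.toFinite
  rw [← χ.slopeCount_eq_nsec h.affine hR, ← χ.slopeCount_eq_nsec h.affine hR']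
  exact slopeCount_eq_of_x_eq ((Set.ncard_coe_finset V).symm.trans h.ncard_eq) hR hR'
    ((χ.mem_join_vertical R' R (h.affine R' hR') (h.affine R hR)).mp hR'M)
    (hthree.trans_eq (χ.card_filter_x_eq_nsec h.affine hR).symm)
    ⟨u', χ.mem_slopes.mpr hE'⟩
    (fun u hu Q hQ => (χ.slopeCount_eq_nsec h.affine hQ u).trans
      (h.nsec_eq_one _ (χ.mem_slopes.mp hu) Q hQ))
    (χ.card_tangentSlopes_le_one h.affine hR htan)
    (χ.card_tangentSlopes_le_one h.affine hR' htan') u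

end HasUndeterminedDirections

end UndeterminedDirections

section Semioval

variable {F : Type*} [Field F]

/-- The set `(S ∖ ℓ) ∪ {N}`. For a semioval with an `a`-secant `ℓ` whose nucleus is `N`, it consists
of `q` points of the affine plane with line at infinity `ℓ`. -/
def affinePart (S : Set (PGPoint F)) (ℓ : PGLine F) (N : PGPoint F) : Set (PGPoint F) :=
  insert N {Q ∈ S | ¬ pgMem Q ℓ}

lemma mem_affinePart {S : Set (PGPoint F)} {ℓ : PGLine F} {N R : PGPoint F} (hR : R ∈ S)
    (hRℓ : ¬ pgMem R ℓ) : R ∈ affinePart S ℓ N :=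
  Or.inr ⟨hR, hRℓ⟩

/-- `S` is a semioval of size `q - 1 + a`, where `a > 2`, with an `a`-secant `ℓ` whose nucleus is
`N`. -/
structure NuclearSecant [Fintype F] (S : Set (PGPoint F)) (ℓ : PGLine F) (N : PGPoint F) :
    Prop where
  semioval : isSemioval S
  two_lt_nsec : 2 < nsec S ℓ
  ncard_eq : S.ncard = Fintype.card F - 1 + nsec S ℓ
  nucleus_mem : ∀ P ∈ S, pgMem P ℓ → ∀ t : PGLine F, pgMem P t → nsec S t = 1 → pgMem N t

namespace NuclearSecant

variable [Fintype F] {S : Set (PGPoint F)} {ℓ m t : PGLine F} {N P Q R E : PGPoint F}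

lemma nonempty_inter (h : NuclearSecant S ℓ N) : {P ∈ S | pgMem P ℓ}.Nonempty :=
  Set.nonempty_of_ncard_ne_zero (ne_of_gt (Nat.zero_lt_of_lt h.two_lt_nsec))

lemma nucleus_notMem_secant (h : NuclearSecant S ℓ N) : ¬ pgMem N ℓ := by
  intro hNℓ
  have hall : ∀ P ∈ S, pgMem P ℓ → P = N := fun P hP hPℓ => by
    obtain ⟨t, ⟨hPt, ht⟩, -⟩ := h.semioval P hP
    have hne : t ≠ ℓ := by
      rintro rfl
      exact absurd h.two_lt_nsec (by omega)
    exact common_point_unique hne hPt hPℓ (h.nucleus_mem P hP hPℓ t hPt ht) hNℓ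
  obtain ⟨P, hP⟩ := h.nonempty_inter
  obtain rfl := hall P hP.1 hP.2
  exact absurd h.two_lt_nsec (by rw [(nsec_eq_one_iff hP.1 hNℓ).mpr hall]; omega)

lemma nucleus_notMem (h : NuclearSecant S ℓ N) : N ∉ S := by
  intro hN
  obtain ⟨P, hP, hPℓ⟩ := h.nonempty_inter
  obtain ⟨t, ⟨hPt, ht⟩, -⟩ := h.semioval P hP
  have hNP : N = P := (nsec_eq_one_iff hP hPt).mp ht N hN (h.nucleus_mem P hP hPℓ t hPt ht)
  exact h.nucleus_notMem_secant (hNP ▸ hPℓ)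

lemma notMem_of_mem_affinePart (h : NuclearSecant S ℓ N) (hQ : Q ∈ affinePart S ℓ N) :
    ¬ pgMem Q ℓ := by
  obtain rfl | hQ := hQ
  exacts [h.nucleus_notMem_secant, hQ.2]

lemma ncard_affinePart (h : NuclearSecant S ℓ N) :
    (affinePart S ℓ N).ncard = Fintype.card F := by
  have hsplit : nsec S ℓ + {Q ∈ S | ¬ pgMem Q ℓ}.ncard = S.ncard :=
    Set.ncard_inter_add_ncard_sdiff_eq_ncard S {Q | pgMem Q ℓ} (Set.toFinite S)
  have hcard : 0 < Fintype.card F := Fintype.card_pos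
  rw [affinePart, Set.ncard_insert_of_notMem (fun hN => h.nucleus_notMem hN.1)]
  have := h.ncard_eq
  omega

-- If `L` misses `S ∖ ℓ`, then it is the tangent to `S` at `P`, and contains `N`.
lemma hasUndeterminedDirections (h : NuclearSecant S ℓ N) :
    HasUndeterminedDirections ℓ (affinePart S ℓ N) {P ∈ S | pgMem P ℓ} where
  ncard_eq := h.ncard_affinePart
  affine _ := h.notMem_of_mem_affinePart
  infinite _ hP := hP.2
  nsec_eq_one P hP R hR := by
    refine nsec_eq_one_of_forall_exists_mem h.ncard_affinePart
      (fun _ => h.notMem_of_mem_affinePart) hP.2 (fun L hL hPL => ?_)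
      (pgJoin_ne (h.notMem_of_mem_affinePart hR) P) (right_mem_pgJoin R P)
    by_cases htan : nsec S L = 1
    · exact ⟨N, Or.inl rfl, h.nucleus_mem P hP.1 hP.2 L hPL htan⟩
    · rw [nsec_eq_one_iff hP.1 hPL] at htan
      push Not at htan
      obtain ⟨Q, hQ, hQL, hQP⟩ := htan
      have hQℓ : ¬ pgMem Q ℓ := fun hQℓ => hQP (common_point_unique hL hQL hQℓ hPL hP.2)
      exact ⟨Q, mem_affinePart hQ hQℓ, hQL⟩

-- Both sides count the points of `S ∪ {N}` on `L`.
open Classical in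
lemma nsec_affinePart_add (h : NuclearSecant S ℓ N) {L : PGLine F} (hL : L ≠ ℓ) :
    nsec (affinePart S ℓ N) L + (if pgMeet L ℓ ∈ S then 1 else 0) =
      nsec S L + if pgMem N L then 1 else 0 := by
  have hP : ∀ Q, pgMem Q L → pgMem Q ℓ → Q = pgMeet L ℓ := fun Q hQL hQℓ =>
    common_point_unique hL hQL hQℓ (pgMeet_mem_left L ℓ) (pgMeet_mem_right L ℓ)
  rw [← nsec_insert h.nucleus_notMem]
  split_ifs with hPS
  · have hPV : pgMeet L ℓ ∉ affinePart S ℓ N := fun hPV =>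
      h.notMem_of_mem_affinePart hPV (pgMeet_mem_right L ℓ)
    have hins := nsec_insert hPV L
    rw [if_pos (pgMeet_mem_left L ℓ)] at hins
    rw [← hins]
    refine congrArg Set.ncard (Set.ext fun Q => and_congr_left fun hQL => ?_)
    simp only [affinePart, Set.mem_insert_iff, Set.mem_ofPred_eq]
    constructor
    · rintro (rfl | rfl | hQ)
      exacts [Or.inr hPS, Or.inl rfl, Or.inr hQ.1]
    · rintro (rfl | hQ)
      · exact Or.inr (Or.inl rfl)
      · by_cases hQℓ : pgMem Q ℓ
        exacts [Or.inl (hP Q hQL hQℓ), Or.inr (Or.inr ⟨hQ, hQℓ⟩)]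
  · refine congrArg Set.ncard (Set.ext fun Q => and_congr_left fun hQL => ?_)
    refine or_congr_right (and_iff_left_of_imp fun hQ hQℓ => hPS ?_)
    exact hP Q hQL hQℓ ▸ hQ

lemma pgMeet_notMem (h : NuclearSecant S ℓ N) {L : PGLine F}
    (htwo : 2 ≤ nsec (affinePart S ℓ N) L) : pgMeet L ℓ ∉ S := fun hmeet => by
  obtain ⟨R, hR, hRL⟩ := Set.nonempty_of_ncard_ne_zero (ne_of_gt (Nat.zero_lt_of_lt htwo))
  rw [eq_pgJoin_pgMeet (h.notMem_of_mem_affinePart hR) hRL] at htwo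
  exact h.hasUndeterminedDirections.notMem_of_two_le hR htwo ⟨hmeet, pgMeet_mem_right L ℓ⟩

lemma mem_tangentDirections_iff (h : NuclearSecant S ℓ N) (hR : R ∈ S) (hRℓ : ¬ pgMem R ℓ)
    (hE : pgMem E ℓ) :
    E ∈ tangentDirections ℓ (affinePart S ℓ N) {P ∈ S | pgMem P ℓ} R ↔
      nsec S (pgJoin R E) = 1 ∧ ¬ pgMem N (pgJoin R E) := by
  have hadd := h.nsec_affinePart_add (pgJoin_ne hRℓ E)
  have hmeet : pgMeet (pgJoin R E) ℓ = E :=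
    common_point_unique (pgJoin_ne hRℓ E) (pgMeet_mem_left _ _) (pgMeet_mem_right _ _)
      (right_mem_pgJoin R E) hE
  have hR_one := one_le_nsec hR (left_mem_pgJoin R E)
  rw [hmeet] at hadd
  constructor
  · rintro ⟨⟨-, hES⟩, hone⟩
    rw [hone, if_neg fun hS => hES ⟨hS, hE⟩] at hadd
    split_ifs at hadd with hN
    · omega
    · exact ⟨by omega, hN⟩
  · rintro ⟨hone, hN⟩
    have hES : E ∉ S := fun hES =>
      hRℓ ((nsec_eq_one_iff hR (left_mem_pgJoin R E)).mp hone E hES (right_mem_pgJoin R E) ▸ hE)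
    rw [if_neg hES, if_neg hN, hone] at hadd
    exact ⟨⟨hE, fun hE => hES hE.1⟩, hadd⟩

lemma eq_of_tangent (h : NuclearSecant S ℓ N) (hR : R ∈ S) {t' : PGLine F} (hRt : pgMem R t)
    (ht : nsec S t = 1) (hRt' : pgMem R t') (ht' : nsec S t' = 1) : t = t' :=
  (h.semioval R hR).unique ⟨hRt, ht⟩ ⟨hRt', ht'⟩

lemma tangentDirections_subsingleton (h : NuclearSecant S ℓ N) (hR : R ∈ S)
    (hRℓ : ¬ pgMem R ℓ) :
    (tangentDirections ℓ (affinePart S ℓ N) {P ∈ S | pgMem P ℓ} R).Subsingleton := by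
  intro E hE E' hE'
  have hEℓ := hE.1.1
  have hEℓ' := hE'.1.1
  rw [h.mem_tangentDirections_iff hR hRℓ hEℓ] at hE
  rw [h.mem_tangentDirections_iff hR hRℓ hEℓ'] at hE'
  exact pgJoin_injOn hRℓ hEℓ hEℓ' <|
    h.eq_of_tangent hR (left_mem_pgJoin R E) hE.1 (left_mem_pgJoin R E') hE'.1

lemma pgMeet_mem_tangentDirections_iff (h : NuclearSecant S ℓ N) (hR : R ∈ S)
    (hRℓ : ¬ pgMem R ℓ) (hRt : pgMem R t) (ht : nsec S t = 1) :
    pgMeet t ℓ ∈ tangentDirections ℓ (affinePart S ℓ N) {P ∈ S | pgMem P ℓ} R ↔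
      ¬ pgMem N t := by
  rw [h.mem_tangentDirections_iff hR hRℓ (pgMeet_mem_right t ℓ), ← eq_pgJoin_pgMeet hRℓ hRt]
  exact and_iff_right ht

lemma tangentDirections_eq_empty_iff (h : NuclearSecant S ℓ N) (hR : R ∈ S)
    (hRℓ : ¬ pgMem R ℓ) (hRt : pgMem R t) (ht : nsec S t = 1) :
    tangentDirections ℓ (affinePart S ℓ N) {P ∈ S | pgMem P ℓ} R = ∅ ↔ pgMem N t := by
  constructor
  · intro hempty
    by_contra hNt
    exact Set.notMem_empty _ <|
      hempty ▸ (h.pgMeet_mem_tangentDirections_iff hR hRℓ hRt ht).mpr hNt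
  · intro hNt
    refine Set.eq_empty_of_forall_notMem fun E hE => ?_
    obtain ⟨hone, hN⟩ := (h.mem_tangentDirections_iff hR hRℓ hE.1.1).mp hE
    exact hN (h.eq_of_tangent hR hRt ht (left_mem_pgJoin R E) hone ▸ hNt)

lemma two_le_nsec_pgJoin_nucleus (h : NuclearSecant S ℓ N) (hR : R ∈ S) (hRℓ : ¬ pgMem R ℓ) :
    2 ≤ nsec (affinePart S ℓ N) (pgJoin R N) :=
  (Set.one_lt_ncard (Set.toFinite _)).mpr
    ⟨R, ⟨mem_affinePart hR hRℓ, left_mem_pgJoin R N⟩, N, ⟨Or.inl rfl, right_mem_pgJoin R N⟩,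
      fun hRN => h.nucleus_notMem (hRN ▸ hR)⟩

lemma cast_nsec_eq_zero_iff (h : NuclearSecant S ℓ N) (hR : R ∈ S) (hRℓ : ¬ pgMem R ℓ)
    (hRt : pgMem R t) (ht : nsec S t = 1) : (nsec S ℓ : F) = 0 ↔ pgMem N t := by
  have hRN := h.two_le_nsec_pgJoin_nucleus hR hRℓ
  rw [eq_pgJoin_pgMeet hRℓ (left_mem_pgJoin R N)] at hRN
  exact (h.hasUndeterminedDirections.ncard_cast_eq_zero_iff (mem_affinePart hR hRℓ)
    (pgMeet_mem_right _ _) hRN (h.tangentDirections_subsingleton hR hRℓ)).trans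
      (h.tangentDirections_eq_empty_iff hR hRℓ hRt ht)

-- Otherwise the characteristic divides `a`, and then all tangents pass through `N`.
lemma nucleus_notMem_tangent (h : NuclearSecant S ℓ N) (hR : R ∈ S) (hRℓ : ¬ pgMem R ℓ)
    (hRt : pgMem R t) (ht : nsec S t = 1) : ¬ pgMem N t := by
  intro hNt
  have ha : (nsec S ℓ : F) = 0 := (h.cast_nsec_eq_zero_iff hR hRℓ hRt ht).mpr hNt
  have hle : S.ncard ≤ Fintype.card F + 1 := by
    refine ncard_le_of_concurrent_tangents h.nucleus_notMem_secant fun P hP => ?_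
    obtain ⟨t', ⟨hPt', ht'⟩, -⟩ := h.semioval P hP
    refine ⟨t', hPt', ?_, ht'⟩
    by_cases hPℓ : pgMem P ℓ
    · exact h.nucleus_mem P hP hPℓ t' hPt' ht'
    · exact (h.cast_nsec_eq_zero_iff hP hPℓ hPt' ht').mp ha
  have := h.ncard_eq
  have := h.two_lt_nsec
  omega

lemma tangentDirections_eq_singleton (h : NuclearSecant S ℓ N) (hR : R ∈ S)
    (hRℓ : ¬ pgMem R ℓ) (hRt : pgMem R t) (ht : nsec S t = 1) :
    tangentDirections ℓ (affinePart S ℓ N) {P ∈ S | pgMem P ℓ} R = {pgMeet t ℓ} :=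
  (h.tangentDirections_subsingleton hR hRℓ).eq_singleton_of_mem <|
    (h.pgMeet_mem_tangentDirections_iff hR hRℓ hRt ht).mpr
      (h.nucleus_notMem_tangent hR hRℓ hRt ht)

lemma three_le_nsec_pgJoin_nucleus (h : NuclearSecant S ℓ N) (hR : R ∈ S)
    (hRℓ : ¬ pgMem R ℓ) : 3 ≤ nsec (affinePart S ℓ N) (pgJoin R N) := by
  have hadd := h.nsec_affinePart_add (pgJoin_ne hRℓ N)
  have htwo := h.two_le_nsec_pgJoin_nucleus hR hRℓ
  have hne : nsec S (pgJoin R N) ≠ 1 := fun hone =>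
    h.nucleus_notMem_tangent hR hRℓ (left_mem_pgJoin R N) hone (right_mem_pgJoin R N)
  rw [if_neg (h.pgMeet_notMem htwo), if_pos (right_mem_pgJoin R N)] at hadd
  omega

open Classical in
lemma card_filter_nsec_pgJoin_eq_one (h : NuclearSecant S ℓ N) (hR : R ∈ S)
    (hRℓ : ¬ pgMem R ℓ) :
    #{E ∈ pointsOn ℓ | nsec (affinePart S ℓ N) (pgJoin R E) = 1} = nsec S ℓ + 1 := by
  obtain ⟨t, ⟨hRt, ht⟩, -⟩ := h.semioval R hR
  have hsing := h.tangentDirections_eq_singleton hR hRℓ hRt ht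
  have hmem : pgMeet t ℓ ∈ tangentDirections ℓ (affinePart S ℓ N) {P ∈ S | pgMem P ℓ} R :=
    hsing ▸ rfl
  have hcoe : ({E ∈ pointsOn ℓ | nsec (affinePart S ℓ N) (pgJoin R E) = 1} : Set (PGPoint F)) =
      insert (pgMeet t ℓ) {P ∈ S | pgMem P ℓ} := by
    rw [Set.insert_eq, ← hsing]
    ext E
    simp only [mem_pointsOn, Set.mem_ofPred_eq, Set.mem_union, tangentDirections]
    constructor
    · exact fun hE => (Classical.em _).symm.imp_left fun hED => ⟨⟨hE.1, hED⟩, hE.2⟩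
    · rintro (⟨⟨hE, -⟩, hone⟩ | hE)
      · exact ⟨hE, hone⟩
      · exact ⟨hE.2, h.hasUndeterminedDirections.nsec_eq_one E hE R (mem_affinePart hR hRℓ)⟩
  rw [← Set.ncard_coe_finset, coe_filter, hcoe, Set.ncard_insert_of_notMem hmem.1.2]
  rfl

lemma sum_nsec_pgJoin_sub_two_add_one (h : NuclearSecant S ℓ N) (hR : R ∈ S)
    (hRℓ : ¬ pgMem R ℓ) :
    ∑ E ∈ pointsOn ℓ, (nsec (affinePart S ℓ N) (pgJoin R E) - 2) + 1 = nsec S ℓ := by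
  classical
  have hRV : R ∈ affinePart S ℓ N := mem_affinePart hR hRℓ
  have hsum : ∑ E ∈ pointsOn ℓ, (nsec (affinePart S ℓ N) (pgJoin R E) +
      if nsec (affinePart S ℓ N) (pgJoin R E) = 1 then 1 else 0) =
      ∑ E ∈ pointsOn ℓ, (2 + (nsec (affinePart S ℓ N) (pgJoin R E) - 2)) := by
    refine sum_congr rfl fun E _ => ?_
    have := one_le_nsec hRV (left_mem_pgJoin R E)
    split_ifs <;> omega
  rw [sum_add_distrib, sum_add_distrib, sum_nsec_pgJoin hRV hRℓ, ← card_filter,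
    h.card_filter_nsec_pgJoin_eq_one hR hRℓ, h.ncard_affinePart, sum_const, card_pointsOn,
    smul_eq_mul] at hsum
  omega

lemma nsec_pgJoin_eq (h : NuclearSecant S ℓ N) (hm : 3 ≤ nsec (affinePart S ℓ N) m)
    (hP : P ∈ S) (hPℓ : ¬ pgMem P ℓ) (hPm : pgMem P m)
    (hR : R ∈ S) (hRℓ : ¬ pgMem R ℓ) (hRm : pgMem R m) (hE : pgMem E ℓ) :
    nsec (affinePart S ℓ N) (pgJoin P E) = nsec (affinePart S ℓ N) (pgJoin R E) := by
  have hmP := eq_pgJoin_pgMeet hPℓ hPm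
  exact h.hasUndeterminedDirections.nsec_pgJoin_eq h.nonempty_inter (mem_affinePart hP hPℓ)
    (mem_affinePart hR hRℓ) (pgMeet_mem_right m ℓ) (hmP ▸ hRm) (hmP ▸ hm)
    (h.tangentDirections_subsingleton hP hPℓ) (h.tangentDirections_subsingleton hR hRℓ) hE

lemma notMem_of_mem_of_two_le (h : NuclearSecant S ℓ N) (hm : 2 ≤ nsec (affinePart S ℓ N) m)
    (hmℓ : m ≠ ℓ) (hP : P ∈ S) (hPm : pgMem P m) : ¬ pgMem P ℓ := fun hPℓ =>
  h.pgMeet_notMem hm <|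
    common_point_unique hmℓ hPm hPℓ (pgMeet_mem_left m ℓ) (pgMeet_mem_right m ℓ) ▸ hP

lemma exists_carrier (h : NuclearSecant S ℓ N) (hm : m ≠ ℓ) (hk : 3 ≤ nsec S m) :
    ∃ C : PGPoint F, pgMem C ℓ ∧
      ∀ P ∈ S, pgMem P m → ∀ t : PGLine F, pgMem P t → nsec S t = 1 → pgMem C t := by
  have hadd := h.nsec_affinePart_add hm
  have htwo : 2 ≤ nsec (affinePart S ℓ N) m := by
    split_ifs at hadd <;> omega
  rw [if_neg (h.pgMeet_notMem htwo)] at hadd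
  have hthree : 3 ≤ nsec (affinePart S ℓ N) m := by omega
  obtain ⟨R, hR, hRm⟩ := Set.nonempty_of_ncard_ne_zero (ne_of_gt (Nat.zero_lt_of_lt hk))
  have hRℓ := h.notMem_of_mem_of_two_le htwo hm hR hRm
  obtain ⟨t₀, ⟨hRt₀, ht₀⟩, -⟩ := h.semioval R hR
  refine ⟨pgMeet t₀ ℓ, pgMeet_mem_right t₀ ℓ, fun P hP hPm t hPt ht => ?_⟩
  have hPℓ := h.notMem_of_mem_of_two_le htwo hm hP hPm
  have hdir : pgMeet t₀ ℓ ∈ tangentDirections ℓ (affinePart S ℓ N) {P ∈ S | pgMem P ℓ} P := by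
    have hmemR : pgMeet t₀ ℓ ∈ tangentDirections ℓ (affinePart S ℓ N) {P ∈ S | pgMem P ℓ} R :=
      h.tangentDirections_eq_singleton hR hRℓ hRt₀ ht₀ ▸ rfl
    exact ⟨hmemR.1, (h.nsec_pgJoin_eq hthree hP hPℓ hPm hR hRℓ hRm hmemR.1.1).trans hmemR.2⟩
  rw [h.tangentDirections_eq_singleton hP hPℓ hPt ht, Set.mem_singleton_iff] at hdir
  exact hdir ▸ pgMeet_mem_left t ℓ

lemma card_add_nsec_affinePart_le (h : NuclearSecant S ℓ N) (hR : R ∈ S) (hRℓ : ¬ pgMem R ℓ)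
    (hRm : pgMem R m) {W : Finset (PGPoint F)} (hWℓ : ∀ E ∈ W, pgMem E ℓ)
    (hW : ∀ E ∈ W, 3 ≤ nsec (affinePart S ℓ N) (pgJoin R E)) (hmW : pgMeet m ℓ ∉ W) :
    #W + nsec (affinePart S ℓ N) m ≤ nsec S ℓ + 1 := by
  classical
  have hsub : insert (pgMeet m ℓ) W ⊆ pointsOn ℓ :=
    insert_subset (mem_pointsOn.mpr (pgMeet_mem_right m ℓ)) fun E hE => mem_pointsOn.mpr (hWℓ E hE)
  have hsum := sum_le_sum_of_subset (f := fun E => nsec (affinePart S ℓ N) (pgJoin R E) - 2) hsub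
  rw [sum_insert hmW, ← eq_pgJoin_pgMeet hRℓ hRm] at hsum
  have hone : #W ≤ ∑ E ∈ W, (nsec (affinePart S ℓ N) (pgJoin R E) - 2) :=
    card_eq_sum_ones W ▸ sum_le_sum fun E hE => Nat.le_sub_of_add_le (hW E hE)
  have := h.sum_nsec_pgJoin_sub_two_add_one hR hRℓ
  omega

/- The lines joining `N` to the points of `m` in the affine part meet `ℓ` in points `E` such that
`RE` has at least three points of the affine part. -/
lemma two_mul_nsec_affinePart_le (h : NuclearSecant S ℓ N)
    (hm : 3 ≤ nsec (affinePart S ℓ N) m) (hNm : ¬ pgMem N m) :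
    2 * nsec (affinePart S ℓ N) m ≤ nsec S ℓ + 1 := by
  classical
  let A := (Set.toFinite {Q ∈ affinePart S ℓ N | pgMem Q m}).toFinset
  have hcardA : #A = nsec (affinePart S ℓ N) m := (Set.ncard_eq_toFinset_card _ _).symm
  have hA : ∀ Q ∈ A, Q ∈ S ∧ ¬ pgMem Q ℓ ∧ pgMem Q m := fun Q hQ => by
    obtain ⟨hQV, hQm⟩ := (Set.Finite.mem_toFinset _).mp hQ
    obtain ⟨hQS, hQℓ⟩ := hQV.resolve_left fun hQN => hNm (hQN ▸ hQm)
    exact ⟨hQS, hQℓ, hQm⟩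
  let W := A.image fun Q => pgMeet (pgJoin Q N) ℓ
  have hcardW : #W = #A := card_image_of_injOn <|
    (injOn_pgMeet_pgJoin h.nucleus_notMem_secant hNm).mono fun Q hQ => (hA Q hQ).2.2
  obtain ⟨R, hRA⟩ : A.Nonempty := card_pos.mp (by omega)
  obtain ⟨hR, hRℓ, hRm⟩ := hA R hRA
  have hle : #W + nsec (affinePart S ℓ N) m ≤ nsec S ℓ + 1 := by
    refine h.card_add_nsec_affinePart_le hR hRℓ hRm ?_ ?_ ?_
    · exact forall_mem_image.mpr fun Q _ => pgMeet_mem_right _ _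
    · refine forall_mem_image.mpr fun Q hQA => ?_
      obtain ⟨hQ, hQℓ, hQm⟩ := hA Q hQA
      rw [h.nsec_pgJoin_eq hm hR hRℓ hRm hQ hQℓ hQm (pgMeet_mem_right _ _),
        ← eq_pgJoin_pgMeet hQℓ (left_mem_pgJoin Q N)]
      exact h.three_le_nsec_pgJoin_nucleus hQ hQℓ
    · intro hM
      obtain ⟨Q, hQA, hQM⟩ := mem_image.mp hM
      exact pgMeet_pgJoin_ne (hA Q hQA).2.1 (hA Q hQA).2.2 hNm hQM
  omega

/- For a further point `R'` of the affine part on `RE`, the line joining `R'` to `m ∩ ℓ` misses `N`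
and has as many points of the affine part as `m`. -/
lemma two_mul_nsec_affinePart_le_of_mem (h : NuclearSecant S ℓ N)
    (hm : 3 ≤ nsec (affinePart S ℓ N) m) (hNm : pgMem N m) (hR : R ∈ S) (hRℓ : ¬ pgMem R ℓ)
    (hRm : pgMem R m) (hE : pgMem E ℓ) (hEm : E ≠ pgMeet m ℓ)
    (hRE : 3 ≤ nsec (affinePart S ℓ N) (pgJoin R E)) :
    2 * nsec (affinePart S ℓ N) m ≤ nsec S ℓ + 1 := by
  have hmR : m = pgJoin R (pgMeet m ℓ) := eq_pgJoin_pgMeet hRℓ hRm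
  have hmRE : m ≠ pgJoin R E := fun hm' =>
    hEm (pgJoin_injOn hRℓ hE (pgMeet_mem_right m ℓ) (hm'.symm.trans hmR))
  obtain ⟨R', hR'V, hR'E, hR'R⟩ := exists_ne_of_one_lt_nsec (Nat.lt_of_succ_lt hRE) R
  have hR'm : ¬ pgMem R' m := fun hR'm =>
    hR'R (common_point_unique hmRE hR'm hR'E hRm (left_mem_pgJoin R E))
  obtain ⟨hR', hR'ℓ⟩ := hR'V.resolve_left fun hR'N => hR'm (hR'N ▸ hNm)
  have hcount : nsec (affinePart S ℓ N) m =
      nsec (affinePart S ℓ N) (pgJoin R' (pgMeet m ℓ)) := by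
    conv_lhs => rw [hmR]
    exact h.nsec_pgJoin_eq hRE hR hRℓ (left_mem_pgJoin R E) hR' hR'ℓ hR'E (pgMeet_mem_right m ℓ)
  have hN : ¬ pgMem N (pgJoin R' (pgMeet m ℓ)) := fun hN => by
    have hNM : N ≠ pgMeet m ℓ := fun hNM => h.nucleus_notMem_secant (hNM ▸ pgMeet_mem_right m ℓ)
    have hm' := line_unique hNM hNm (pgMeet_mem_left m ℓ) hN (right_mem_pgJoin R' (pgMeet m ℓ))
    exact hR'm (hm' ▸ left_mem_pgJoin R' (pgMeet m ℓ))
  rw [hcount] at hm ⊢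
  exact h.two_mul_nsec_affinePart_le hm hN

lemma nsec_affinePart_eq_or_two_mul_le (h : NuclearSecant S ℓ N)
    (hm : 3 ≤ nsec (affinePart S ℓ N) m) (hNm : pgMem N m) :
    nsec (affinePart S ℓ N) m = nsec S ℓ + 1 ∨
      2 * nsec (affinePart S ℓ N) m ≤ nsec S ℓ + 1 := by
  obtain ⟨R, hRV, hRm, hRN⟩ := exists_ne_of_one_lt_nsec (Nat.lt_of_succ_lt hm) N
  obtain ⟨hR, hRℓ⟩ := hRV.resolve_left hRN
  by_cases hother : ∃ E, pgMem E ℓ ∧ E ≠ pgMeet m ℓ ∧ 3 ≤ nsec (affinePart S ℓ N) (pgJoin R E)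
  · obtain ⟨E, hE, hEm, hRE⟩ := hother
    exact Or.inr (h.two_mul_nsec_affinePart_le_of_mem hm hNm hR hRℓ hRm hE hEm hRE)
  · push Not at hother
    have hsum := h.sum_nsec_pgJoin_sub_two_add_one hR hRℓ
    rw [sum_eq_single_of_mem (pgMeet m ℓ) (mem_pointsOn.mpr (pgMeet_mem_right m ℓ))
      fun E hE hEm => Nat.sub_eq_zero_of_le (Nat.le_of_lt_succ (hother E (mem_pointsOn.mp hE) hEm)),
      ← eq_pgJoin_pgMeet hRℓ hRm] at hsum
    omega

lemma nsec_eq_or (h : NuclearSecant S ℓ N) (hm : m ≠ ℓ) (hk : nsec S ℓ ≤ 2 * nsec S m) :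
    (nsec S m = nsec S ℓ ∧ pgMem N m) ∨ (2 * nsec S m ≤ nsec S ℓ + 1 ∧ ¬ pgMem N m) := by
  have hadd := h.nsec_affinePart_add hm
  have ha := h.two_lt_nsec
  by_cases hthree : 3 ≤ nsec (affinePart S ℓ N) m
  · rw [if_neg (h.pgMeet_notMem (by omega))] at hadd
    split_ifs at hadd with hNm
    · rcases h.nsec_affinePart_eq_or_two_mul_le hthree hNm with hmax | hhalf
      · exact Or.inl ⟨by omega, hNm⟩
      · omega
    · have := h.two_mul_nsec_affinePart_le hthree hNm
      exact Or.inr ⟨by omega, hNm⟩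
  · have hmeet : pgMeet m ℓ ∈ S → nsec (affinePart S ℓ N) m ≤ 1 := fun hmeet =>
      Nat.le_of_lt_succ (not_le.mp fun htwo => h.pgMeet_notMem htwo hmeet)
    split_ifs at hadd with hmS hNm hNm
    · have := hmeet hmS
      omega
    · have := hmeet hmS
      exact Or.inr ⟨by omega, hNm⟩
    · omega
    · exact Or.inr ⟨by omega, hNm⟩

end NuclearSecant

end Semioval

lemma eq_ceil_half {a k : ℕ} (h1 : a ≤ 2 * k) (h2 : 2 * k ≤ a + 1) :
    (k : ℤ) = ⌈(a : ℚ) / 2⌉ := by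
  have h1' : (a : ℚ) ≤ 2 * k := by exact_mod_cast h1
  have h2' : (2 : ℚ) * k ≤ a + 1 := by exact_mod_cast h2
  refine (Int.ceil_eq_iff.mpr ⟨?_, ?_⟩).symm <;> push_cast <;> linarith

/-- Let `S` be a semioval of size `q − 1 + a`, `a > 2`, in `PG(2,q)`, `q = p^h`, with an
`a`-secant `ℓ` with nucleus `N`, and let `m ≠ ℓ` be a `k`-secant of `S`.  Then:
(1) for every `R ∈ S ∖ ℓ` the line `RN` is not a tangent to `S`;
(2) if `k ≥ 3`, then the tangents to `S` at the points of `m ∩ S` are contained in a pencil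
    whose carrier lies on `ℓ`;
(3) if `k > (a − 1)/2`, then either `k = a` and `N ∈ m`, or `k = ⌈a/2⌉` and `N ∉ m`. -/
theorem stmt_7 {F : Type*} [Field F] [Fintype F] (p h q : ℕ) (hp : p.Prime) (hq : q = p ^ h)
    (hcard : Fintype.card F = q)
    (a : ℕ) (ha : 2 < a)
    (S : Set (PGPoint F)) (hS : isSemioval S) (hsize : S.ncard = q - 1 + a)
    (ℓ : PGLine F) (hℓ : nsec S ℓ = a)
    (N : PGPoint F)
    (hN : ∀ P ∈ S, pgMem P ℓ → ∀ t : PGLine F, pgMem P t → nsec S t = 1 → pgMem N t)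
    (k : ℕ) (m : PGLine F) (hm : m ≠ ℓ) (hk : nsec S m = k) :
    -- (1)
    (∀ R ∈ S, ¬ pgMem R ℓ → R ≠ N →
      ∀ t : PGLine F, pgMem R t → pgMem N t → nsec S t ≠ 1) ∧
    -- (2)
    (3 ≤ k → ∃ C : PGPoint F, pgMem C ℓ ∧
      ∀ P ∈ S, pgMem P m → ∀ t : PGLine F, pgMem P t → nsec S t = 1 → pgMem C t) ∧
    -- (3)
    (((a : ℚ) - 1) / 2 < (k : ℚ) →
      (k = a ∧ pgMem N m) ∨ ((k : ℤ) = ⌈(a : ℚ) / 2⌉ ∧ ¬ pgMem N m)) := by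
  subst hcard hℓ hk
  have hsecant : NuclearSecant S ℓ N := ⟨hS, ha, hsize, hN⟩
  refine ⟨fun R hR hRℓ _ t hRt hNt ht => hsecant.nucleus_notMem_tangent hR hRℓ hRt ht hNt,
    hsecant.exists_carrier hm, fun hlt => ?_⟩
  have hle : nsec S ℓ ≤ 2 * nsec S m := by
    have hlt' : (nsec S ℓ : ℚ) < 2 * nsec S m + 1 := by linarith
    exact Nat.le_of_lt_succ (by exact_mod_cast hlt')
  exact (hsecant.nsec_eq_or hm hle).imp_right fun h => ⟨eq_ceil_half hle h.1, h.2⟩
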